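/- arXiv:1701.05150 — 2 statements merged into one kernel-verified Lean document; each statement's English description precedes it below -/
import Mathlib

section
/- Let n ≥ 1 be an integer and I ⊆ ℝ an interval. Let H, L, ρ : I → ℝ be functions such that: H is differentiable with H(t) < 0 for all t ∈ I; ρ is differentiable with ρ(t) > 0 and ρ'(t) = −L(t)·H(t)·ρ(t) for all t ∈ I; and 0 ≤ L(t) ≤ (n/H(t)²)·H'(t) for all t ∈ I. Then the function t ↦ (−H(t))ⁿ·ρ(t) is nonincreasing (antitone) on I. -/
open Set Filter

/-- Pointwise Fischer–Moncrief volume monotonicity: if `H < 0`, `ρ > 0` evolves by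
`ρ' = -L·H·ρ`, and `0 ≤ L ≤ (n/H²)·H'` on an interval `I`, then `(-H)ⁿ·ρ` is
nonincreasing on `I`. -/
theorem pointwise_normalized_volume_antitone
    (n : ℕ) (hn : 1 ≤ n) (I : Set ℝ) (hI : I.OrdConnected)
    (H H' L ρ : ℝ → ℝ)
    (hHderiv : ∀ t ∈ I, HasDerivWithinAt H (H' t) I t)
    (hHneg : ∀ t ∈ I, H t < 0)
    (hρpos : ∀ t ∈ I, 0 < ρ t)
    (hρderiv : ∀ t ∈ I, HasDerivWithinAt ρ (-(L t) * H t * ρ t) I t)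
    (hL0 : ∀ t ∈ I, 0 ≤ L t)
    (hL1 : ∀ t ∈ I, L t ≤ ((n : ℝ) / (H t) ^ 2) * H' t) :
    AntitoneOn (fun t => (-(H t)) ^ n * ρ t) I := by
  have hd : ∀ t ∈ I, HasDerivWithinAt (fun t => (-(H t)) ^ n * ρ t)
      (((n : ℝ) * (-(H t)) ^ (n - 1) * (-(H' t))) * ρ t
        + (-(H t)) ^ n * (-(L t) * H t * ρ t)) I t := by
    intro t ht
    exact (((hHderiv t ht).fun_neg).fun_pow n).fun_mul (hρderiv t ht)
  have hd' : ∀ t ∈ interior I, HasDerivAt (fun t => (-(H t)) ^ n * ρ t)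
      (((n : ℝ) * (-(H t)) ^ (n - 1) * (-(H' t))) * ρ t
        + (-(H t)) ^ n * (-(L t) * H t * ρ t)) t := fun t ht =>
    (hd t (interior_subset ht)).hasDerivAt (mem_interior_iff_mem_nhds.mp ht)
  refine antitoneOn_of_deriv_nonpos hI.convex (fun t ht => (hd t ht).continuousWithinAt)
    (fun t ht => (hd' t ht).differentiableAt.differentiableWithinAt) ?_
  intro t ht
  rw [(hd' t ht).deriv]
  have htI := interior_subset ht
  have hH := hHneg t htI
  have hH2 : 0 < (H t) ^ 2 := by nlinarith
  have key : L t * (H t) ^ 2 ≤ n * H' t := by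
    have h := hL1 t htI
    rwa [div_mul_eq_mul_div, le_div_iff₀ hH2] at h
  obtain ⟨m, rfl⟩ : ∃ m, n = m + 1 := ⟨n - 1, by omega⟩
  have hp : 0 ≤ (-(H t)) ^ m * ρ t :=
    mul_nonneg (pow_nonneg (by linarith) m) (hρpos t htI).le
  have h := mul_nonneg hp (sub_nonneg.mpr key)
  rw [Nat.add_sub_cancel, pow_succ]
  linarith
end

section
/- Let t₀ > 0 and let F : [t₀,∞) → (0,∞) be continuous with limsup_{t→∞} t²·F(t) = ∞. Then there exists a sequence (tᵢ) with tᵢ → ∞ such that, setting Qᵢ := F(tᵢ), one has: (a) lim_{i→∞} Qᵢ·tᵢ² = ∞; and (b) for every A > 0, limsup_{i→∞} sup{ F(s)/Qᵢ : s ∈ [tᵢ − A·Qᵢ^{−1/2}, tᵢ + A·Qᵢ^{−1/2}] ∩ [t₀,∞) } ≤ 1. -/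
open Set Filter

lemma le_of_sq_le_sq_aux {a b : ℝ} (h : a ^ 2 ≤ b ^ 2) (hb : 0 ≤ b) : a ≤ b :=
  abs_le_of_sq_le_sq' h hb |>.2

lemma pick_aux (t₀ : ℝ) (ht₀ : 0 < t₀) (F : ℝ → ℝ)
    (hcont : ContinuousOn F (Set.Ici t₀))
    (hpos : ∀ t ∈ Set.Ici t₀, 0 < F t)
    (hunbdd : ∀ C : ℝ, ∃ᶠ t in atTop, C ≤ t ^ 2 * F t) (n : ℕ) :
    ∃ τ T : ℝ, t₀ ≤ τ ∧ (n : ℝ) ≤ τ ∧ τ < T ∧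
      (n + 1 : ℝ) ≤ Real.sqrt (F τ) * τ ∧ (n + 1 : ℝ) ≤ Real.sqrt (F τ) * (T - τ) ∧
      ∀ s, t₀ ≤ s → s ≤ T → F s * (s * (T - s)) ^ 2 ≤ F τ * (τ * (T - τ)) ^ 2 := by
  have hc2 : ContinuousOn (fun t => t ^ 2 * F t) (Set.Icc t₀ (t₀ + n)) :=
    (continuousOn_id.pow 2).mul (hcont.mono Set.Icc_subset_Ici_self)
  obtain ⟨K, hK⟩ := (isCompact_Icc.image_of_continuousOn hc2).bddAbove
  have hK' : ∀ t, t₀ ≤ t → t ≤ t₀ + n → t ^ 2 * F t ≤ K := fun t h1 h2 =>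
    hK ⟨t, ⟨h1, h2⟩, rfl⟩
  obtain ⟨t1, h1C, h1t⟩ := ((hunbdd (4 * (|K| + 1 + (n + 1) ^ 2))).and_eventually
    (eventually_ge_atTop t₀)).exists
  have ht1 : 0 < t1 := by linarith
  have hc3 : ContinuousOn (fun s => F s * (s * (2 * t1 - s)) ^ 2) (Set.Icc t₀ (2 * t1)) :=
    (hcont.mono Set.Icc_subset_Ici_self).mul (Continuous.continuousOn (by fun_prop))
  obtain ⟨τ, ⟨hτ0, hτT⟩, hmax⟩ := isCompact_Icc.exists_isMaxOn
    (⟨t1, h1t, by linarith⟩ : (Set.Icc t₀ (2 * t1)).Nonempty) hc3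
  have hmax' : ∀ s, t₀ ≤ s → s ≤ 2 * t1 →
      F s * (s * (2 * t1 - s)) ^ 2 ≤ F τ * (τ * (2 * t1 - τ)) ^ 2 := fun s a b => hmax ⟨a, b⟩
  have hF := hpos τ hτ0
  have hτ : 0 < τ := by linarith
  set r := Real.sqrt (F τ) with hr
  have hr0 : 0 < r := Real.sqrt_pos.2 hF
  have hr2 : r ^ 2 = F τ := Real.sq_sqrt hF.le
  set C := |K| + 1 + ((n : ℝ) + 1) ^ 2 with hCdef
  have hM : C * (2 * t1) ^ 2 ≤ F τ * (τ * (2 * t1 - τ)) ^ 2 := by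
    refine le_trans ?_ (hmax' t1 h1t (by linarith))
    have := mul_le_mul_of_nonneg_right h1C (sq_nonneg t1)
    nlinarith
  have hd : 0 ≤ 2 * t1 - τ := by linarith
  have hT2 : 0 < (2 * t1) ^ 2 := by positivity
  have hA : C ≤ F τ * τ ^ 2 := by
    have h : (2 * t1 - τ) ^ 2 ≤ (2 * t1) ^ 2 := pow_le_pow_left₀ hd (by linarith) 2
    have := mul_le_mul_of_nonneg_left h (by positivity : 0 ≤ F τ * τ ^ 2)
    refine le_of_mul_le_mul_right ?_ hT2
    nlinarith
  have hB : C ≤ F τ * (2 * t1 - τ) ^ 2 := by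
    have h : τ ^ 2 ≤ (2 * t1) ^ 2 := pow_le_pow_left₀ hτ.le (by linarith) 2
    have := mul_le_mul_of_nonneg_left h (by positivity : 0 ≤ F τ * (2 * t1 - τ) ^ 2)
    refine le_of_mul_le_mul_right ?_ hT2
    nlinarith
  have hKa := le_abs_self K
  have hKn := abs_nonneg K
  refine ⟨τ, 2 * t1, hτ0, ?_, ?_, ?_, ?_, hmax'⟩
  · by_contra! hlt
    have := hK' τ hτ0 (by linarith)
    nlinarith [sq_nonneg ((n : ℝ) + 1)]
  · rcases hτT.lt_or_eq with h | h
    · exact h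
    · rw [h] at hB
      nlinarith [sq_nonneg ((n : ℝ) + 1)]
  · refine le_of_sq_le_sq_aux ?_ (by positivity)
    rw [mul_pow, hr2]; linarith
  · refine le_of_sq_le_sq_aux ?_ (by positivity)
    rw [mul_pow, hr2]; linarith

/-- Type-IIb point-picking lemma underlying Proposition 3.1 of Lott, "Collapsing in the
Einstein flow" (after Chow–Lu–Ni): if `F > 0` is continuous on `[t₀,∞)` with
`limsup_{t→∞} t²F(t) = ∞`, then there are times `tᵢ → ∞` with `Qᵢtᵢ² → ∞` (`Qᵢ = F(tᵢ)`)
such that for every `A > 0`, `limsup_i sup{F(s)/Qᵢ : s ∈ [tᵢ − AQᵢ^{-1/2}, tᵢ + AQᵢ^{-1/2}] ∩ [t₀,∞)} ≤ 1`,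
the latter stated as: for all `ε > 0`, eventually `F(s)/Qᵢ ≤ 1 + ε` on that interval. -/
theorem typeIIb_point_picking
    (t₀ : ℝ) (ht₀ : 0 < t₀) (F : ℝ → ℝ)
    (hcont : ContinuousOn F (Set.Ici t₀))
    (hpos : ∀ t ∈ Set.Ici t₀, 0 < F t)
    (hunbdd : ∀ C : ℝ, ∃ᶠ t in atTop, C ≤ t ^ 2 * F t) :
    ∃ t : ℕ → ℝ, (∀ i, t₀ ≤ t i) ∧ Tendsto t atTop atTop ∧
      Tendsto (fun i => F (t i) * (t i) ^ 2) atTop atTop ∧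
      ∀ A > (0 : ℝ), ∀ ε > (0 : ℝ), ∀ᶠ i in atTop,
        ∀ s ∈ Set.Icc (t i - A / Real.sqrt (F (t i))) (t i + A / Real.sqrt (F (t i))) ∩
            Set.Ici t₀,
          F s / F (t i) ≤ 1 + ε := by
  choose τ T h0 hn hT h1 h2 hmax using pick_aux t₀ ht₀ F hcont hpos hunbdd
  refine ⟨τ, h0, tendsto_atTop_mono hn tendsto_natCast_atTop_atTop, ?_, ?_⟩
  · refine tendsto_atTop_mono (fun n => ?_) tendsto_natCast_atTop_atTop
    have hF := hpos _ (h0 n)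
    have hr2 : Real.sqrt (F (τ n)) ^ 2 = F (τ n) := Real.sq_sqrt hF.le
    have hn0 : (0 : ℝ) ≤ n := n.cast_nonneg
    have := pow_le_pow_left₀ (by positivity) (h1 n) 2
    rw [mul_pow, hr2] at this
    nlinarith
  · intro A hA ε hε
    have hδ : Tendsto (fun n : ℕ => A / ((n : ℝ) + 1)) atTop (nhds 0) :=
      tendsto_const_nhds.div_atTop
        (tendsto_atTop_add_const_right _ _ tendsto_natCast_atTop_atTop)
    have hlim : Tendsto (fun n : ℕ => (1 - A / ((n : ℝ) + 1)) ^ 4 * (1 + ε)) atTop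
        (nhds ((1 - 0) ^ 4 * (1 + ε))) := ((hδ.const_sub 1).pow 4).mul_const _
    filter_upwards [hlim.eventually_const_lt (show (1 : ℝ) < (1 - 0) ^ 4 * (1 + ε) by linarith),
      hδ.eventually_lt_const one_pos] with n hn1 hn2
    rintro s ⟨⟨hs1, hs2⟩, hs0⟩
    have hF := hpos _ (h0 n)
    have hFs := hpos s hs0
    have hτ : 0 < τ n := lt_of_lt_of_le ht₀ (h0 n)
    have hTτ : 0 < T n - τ n := by linarith [hT n]
    have hr0 : 0 < Real.sqrt (F (τ n)) := Real.sqrt_pos.2 hF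
    have hN : (0 : ℝ) < n + 1 := by positivity
    have key : ∀ x : ℝ, (n + 1 : ℝ) ≤ Real.sqrt (F (τ n)) * x →
        A / Real.sqrt (F (τ n)) ≤ A / (n + 1) * x := by
      intro x hx
      rw [div_mul_eq_mul_div, div_le_div_iff₀ hr0 hN]
      have := mul_le_mul_of_nonneg_left hx hA.le
      nlinarith
    have k1 := key _ (h1 n)
    have k2 := key _ (h2 n)
    set δ := A / ((n : ℝ) + 1) with hδd
    have hδ1 : 0 < 1 - δ := by linarith
    have b1 : (1 - δ) * τ n ≤ s := by linarith
    have b2 : (1 - δ) * (T n - τ n) ≤ T n - s := by linarith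
    have hsT : 0 < T n - s := lt_of_lt_of_le (by positivity) b2
    have hm := hmax n s hs0 (by linarith)
    have b3 : ((1 - δ) * τ n) * ((1 - δ) * (T n - τ n)) ≤ s * (T n - s) :=
      mul_le_mul b1 b2 (by positivity) (le_trans (by positivity) b1)
    have b4 := pow_le_pow_left₀ (by positivity) b3 2
    have b5 := (mul_le_mul_of_nonneg_left b4 hFs.le).trans hm
    have hP : 0 < (τ n * (T n - τ n)) ^ 2 := by positivity
    have b6 : F s * (1 - δ) ^ 4 ≤ F (τ n) := by
      refine le_of_mul_le_mul_right ?_ hP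
      calc _ = F s * ((1 - δ) * τ n * ((1 - δ) * (T n - τ n))) ^ 2 := by ring
        _ ≤ _ := b5
    rw [div_le_iff₀ hF]
    have c1 := mul_le_mul_of_nonneg_left b6 (by linarith : 0 ≤ 1 + ε)
    have c2 := mul_le_mul_of_nonneg_left hn1.le hFs.le
    linarith
end
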